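/- arXiv:2101.06251 — 8 statements merged into one kernel-verified Lean document; each statement's English description precedes it below -/
import Mathlib

section
/- Let V(ρ, τ) be the two-field potential with parameters r, h, t, f₁, f₃, f₅. Then, evaluating at (ρ, τ) = (1, 1): 2·[ −(5/3)·ρ∂_ρV + (11/6)·τ∂_τV + ∂_ρ̂²V + ∂_τ̂²V ] = −(2/3)·r + (14/3)·h + (1/3)·(f₃ + 10·f₅), where ∂_ρ̂²V = (2/3)·(ρ∂_ρ)²V and ∂_τ̂²V = (1/2)·(τ∂_τ)²V. -/
/-!
A monomial `x ^ p` is an eigenfunction of the Euler operator `x d/dx` with eigenvalue `p`. On each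
of the slices `τ = 1` and `ρ = 1` the potential is a finite combination of real powers, so
`euler_sum` and `euler_euler_sum` evaluate the first and second Euler derivatives at `1` as the
first and second moments of the exponents. A monomial `ρ ^ a * τ ^ b` therefore contributes its
coefficient times `-(5/3) a + (11/6) b + (2/3) a² + (1/2) b²`, which vanishes for the `t` and `f₁`
terms and gives the stated multiples of `r`, `h`, `f₃`, `f₅`.
-/

/-- The two-field scalar potential `V(ρ, τ)` (with `M_p = 1`), with parameters
`r = 𝓡₆`, `h = |H|²`, `t = g_s T₁₀`, `f₁, f₃, f₅ = g_s²|F_q|²`: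
`2·V = −τ⁻²·(ρ⁻¹·r − (1/2)·ρ⁻³·h) − τ⁻³·ρ^(−1/2)·t/6 + (1/2)·τ⁻⁴·(ρ²·f₁ + f₃ + ρ⁻²·f₅)`. -/
noncomputable def V2 (r h t f1 f3 f5 : ℝ) (ρ τ : ℝ) : ℝ :=
  (1/2) * (-(τ ^ (-2 : ℝ)) * (ρ ^ (-1 : ℝ) * r - (1/2) * ρ ^ (-3 : ℝ) * h)
    - τ ^ (-3 : ℝ) * ρ ^ (-(1/2) : ℝ) * t / 6
    + (1/2) * τ ^ (-4 : ℝ) * (ρ ^ (2 : ℝ) * f1 + f3 + ρ ^ (-2 : ℝ) * f5))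

/-- The operator `ρ ∂_ρ` acting on functions of `(ρ, τ)`. -/
noncomputable def rDr (F : ℝ → ℝ → ℝ) (ρ τ : ℝ) : ℝ :=
  ρ * deriv (fun x => F x τ) ρ

/-- The operator `τ ∂_τ` acting on functions of `(ρ, τ)`. -/
noncomputable def tDt (F : ℝ → ℝ → ℝ) (ρ τ : ℝ) : ℝ :=
  τ * deriv (fun y => F ρ y) τ

theorem euler_sum {n : ℕ} (c p : Fin n → ℝ) {x : ℝ} (hx : 0 < x) :
    x * deriv (fun y : ℝ => ∑ i, c i * y ^ p i) x = ∑ i, c i * p i * x ^ p i := by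
  have hd : HasDerivAt (fun y : ℝ => ∑ i, c i * y ^ p i)
      (∑ i, c i * (p i * x ^ (p i - 1))) x :=
    HasDerivAt.fun_sum fun i _ =>
      (Real.hasDerivAt_rpow_const (p := p i) (Or.inl hx.ne')).const_mul (c i)
  rw [hd.deriv, Finset.mul_sum]
  refine Finset.sum_congr rfl fun i _ => ?_
  rw [Real.rpow_sub_one hx.ne']
  field_simp

theorem euler_euler_sum {n : ℕ} (c p : Fin n → ℝ) :
    (1 : ℝ) * deriv (fun z : ℝ => z * deriv (fun y : ℝ => ∑ i, c i * y ^ p i) z) 1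
      = ∑ i, c i * p i * p i := by
  -- The formula for the first Euler derivative holds only for `z > 0`, hence near `1`.
  have he : (fun z : ℝ => z * deriv (fun y : ℝ => ∑ i, c i * y ^ p i) z)
      =ᶠ[nhds 1] fun z : ℝ => ∑ i, c i * p i * z ^ p i := by
    filter_upwards [lt_mem_nhds (zero_lt_one' ℝ)] with z hz using euler_sum c p hz
  rw [he.deriv_eq, euler_sum (fun i => c i * p i) p one_pos]
  simp

theorem V2_slice_rho (r h t f1 f3 f5 : ℝ) :
    (fun x => V2 r h t f1 f3 f5 x 1) = fun x : ℝ =>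
      ∑ i, ![-r / 2, h / 4, -t / 12, f1 / 4, f3 / 4, f5 / 4] i *
        x ^ (![-1, -3, -(1/2), 2, 0, -2] : Fin 6 → ℝ) i := by
  funext x
  simp only [V2, Fin.sum_univ_six, Real.one_rpow]
  simp only [Matrix.cons_val, Real.rpow_zero]
  ring

theorem V2_slice_tau (r h t f1 f3 f5 : ℝ) :
    (fun y => V2 r h t f1 f3 f5 1 y) = fun y : ℝ =>
      ∑ i, ![-r / 2 + h / 4, -t / 12, (f1 + f3 + f5) / 4] i *
        y ^ (![-2, -3, -4] : Fin 3 → ℝ) i := by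
  funext y
  simp only [V2, Fin.sum_univ_three, Real.one_rpow]
  simp only [Matrix.cons_val]
  ring

/-- At `(ρ, τ) = (1, 1)`:
`2·[ −(5/3)·ρ∂_ρV + (11/6)·τ∂_τV + ∂_ρ̂²V + ∂_τ̂²V ] = −(2/3)·r + (14/3)·h + (1/3)·(f₃ + 10·f₅)`,
where `∂_ρ̂²V = (2/3)·(ρ∂_ρ)²V` and `∂_τ̂²V = (1/2)·(τ∂_τ)²V`. -/
theorem two_field_trace_identity (r h t f1 f3 f5 : ℝ) :
    2 * (-(5/3) * rDr (V2 r h t f1 f3 f5) 1 1 + (11/6) * tDt (V2 r h t f1 f3 f5) 1 1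
      + (2/3) * rDr (rDr (V2 r h t f1 f3 f5)) 1 1
      + (1/2) * tDt (tDt (V2 r h t f1 f3 f5)) 1 1)
    = -(2/3) * r + (14/3) * h + (1/3) * (f3 + 10 * f5) := by
  simp only [rDr, tDt]
  rw [V2_slice_rho, V2_slice_tau, euler_euler_sum, euler_euler_sum,
    euler_sum _ _ one_pos, euler_sum _ _ one_pos]
  simp only [Fin.sum_univ_six, Fin.sum_univ_three, Real.one_rpow, Matrix.cons_val]
  ring
end

section
/- Let V(ρ, τ) be the two-field potential with parameters r, h, t, f₁, f₃, f₅, and suppose ∂_ρV = ∂_τV = 0 at (ρ, τ) = (1, 1) (an extremum). If h ≥ 0, f₃ ≥ 0, f₅ ≥ 0 and r < 0, then the trace of the canonical Hessian at the extremum is positive: (∂_ρ̂²V + ∂_τ̂²V)|_{(1,1)} > 0. -/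
/-- The Euler operator `x d/dx` is diagonal on real powers. -/
theorem euler_sum_rpow {n : ℕ} (c p : Fin n → ℝ) {x : ℝ} (hx : 0 < x) :
    x * deriv (fun y : ℝ => ∑ i, c i * y ^ p i) x = ∑ i, (c i * p i) * x ^ p i := by
  have hd : HasDerivAt (fun y : ℝ => ∑ i, c i * y ^ p i)
      (∑ i, c i * (p i * x ^ (p i - 1))) x :=
    HasDerivAt.fun_sum fun i _ => (Real.hasDerivAt_rpow_const (Or.inl hx.ne')).const_mul (c i)
  rw [hd.deriv, Finset.mul_sum]
  refine Finset.sum_congr rfl fun i _ => ?_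
  rw [Real.rpow_sub_one hx.ne']
  field_simp

theorem deriv_sum_rpow_one {n : ℕ} (c p : Fin n → ℝ) :
    deriv (fun y : ℝ => ∑ i, c i * y ^ p i) 1 = ∑ i, c i * p i := by
  simpa using euler_sum_rpow c p one_pos

theorem euler_euler_sum_rpow_one {n : ℕ} (c p : Fin n → ℝ) :
    deriv (fun x : ℝ => x * deriv (fun y : ℝ => ∑ i, c i * y ^ p i) x) 1
      = ∑ i, c i * p i * p i := by
  have he : (fun x : ℝ => x * deriv (fun y : ℝ => ∑ i, c i * y ^ p i) x)
      =ᶠ[nhds 1] fun x => ∑ i, (c i * p i) * x ^ p i := by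
    filter_upwards [lt_mem_nhds (one_pos : (0 : ℝ) < 1)] with x hx
    exact euler_sum_rpow c p hx
  rw [he.deriv_eq, deriv_sum_rpow_one]

theorem V2_rho (r h t f1 f3 f5 : ℝ) :
    (fun x => V2 r h t f1 f3 f5 x 1) = fun x : ℝ => ∑ i,
      (![-r / 2, h / 4, -t / 12, f1 / 4, f3 / 4, f5 / 4] : Fin 6 → ℝ) i *
        x ^ (![-1, -3, -(1/2), 2, 0, -2] : Fin 6 → ℝ) i := by
  funext x
  simp only [V2, Fin.sum_univ_six, Matrix.cons_val, Real.one_rpow, Real.rpow_zero]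
  ring

theorem V2_tau (r h t f1 f3 f5 : ℝ) :
    (fun y => V2 r h t f1 f3 f5 1 y) = fun y : ℝ => ∑ i,
      (![-r / 2 + h / 4, -t / 12, (f1 + f3 + f5) / 4] : Fin 3 → ℝ) i *
        y ^ (![-2, -3, -4] : Fin 3 → ℝ) i := by
  funext y
  simp only [V2, Fin.sum_univ_three, Matrix.cons_val, Real.one_rpow]
  ring

/-- If `(1,1)` is an extremum of `V` (`∂_ρV = ∂_τV = 0` there), and
`h ≥ 0`, `f₃ ≥ 0`, `f₅ ≥ 0`, `r < 0`, then the trace of the canonical Hessian at the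
extremum is positive: `(∂_ρ̂²V + ∂_τ̂²V)|₍₁,₁₎ > 0`. -/
theorem two_field_trace_pos (r h t f1 f3 f5 : ℝ)
    (hρ : deriv (fun x => V2 r h t f1 f3 f5 x 1) 1 = 0)
    (hτ : deriv (fun y => V2 r h t f1 f3 f5 1 y) 1 = 0)
    (hh : 0 ≤ h) (hf3 : 0 ≤ f3) (hf5 : 0 ≤ f5) (hr : r < 0) :
    0 < (2/3) * rDr (rDr (V2 r h t f1 f3 f5)) 1 1
      + (1/2) * tDt (tDt (V2 r h t f1 f3 f5)) 1 1 := by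
  simp only [rDr, tDt, one_mul]
  rw [V2_rho, deriv_sum_rpow_one] at hρ
  rw [V2_tau, deriv_sum_rpow_one] at hτ
  rw [V2_rho, V2_tau, euler_euler_sum_rpow_one, euler_euler_sum_rpow_one]
  simp only [Fin.sum_univ_six, Fin.sum_univ_three, Matrix.cons_val] at hρ hτ ⊢
  linarith
end

section
/- Let V(ρ, τ) be the two-field potential with parameters r, h, t, f₁, f₃, f₅, and suppose ∂_ρV = ∂_τV = 0 at (ρ, τ) = (1, 1) (an extremum). Then the determinant of the canonical Hessian M̂ = [[∂_ρ̂²V, ∂_ρ̂∂_τ̂V], [∂_ρ̂∂_τ̂V, ∂_τ̂²V]] evaluated at (1, 1) satisfies 4·det M̂ = (2/81)·[ 3·f₅·(−24·f₅ + t + 72·f₁) − 36·f₁·(4·f₁ − r) ] + (2/81)·(6·r + t)·(18·f₁ + 12·r + t). -/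
/-- `W(x, y) = V(exp(√(2/3)·x), exp(y/√2))`: the potential in canonical field
coordinates; its Hessian at the origin is the canonical Hessian `M̂` at `(1,1)`. -/
noncomputable def W2 (r h t f1 f3 f5 : ℝ) (x y : ℝ) : ℝ :=
  V2 r h t f1 f3 f5 (Real.exp (Real.sqrt (2/3) * x)) (Real.exp (y / Real.sqrt 2))

/-- `∂ₓₓW` at the origin: the `ρ̂ρ̂` entry of the canonical Hessian `M̂` at `(1,1)`. -/
noncomputable def Wxx (r h t f1 f3 f5 : ℝ) : ℝ :=
  deriv (fun x => deriv (fun x' => W2 r h t f1 f3 f5 x' 0) x) 0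

/-- `∂ᵧ∂ₓW` at the origin: the `ρ̂τ̂` entry of the canonical Hessian `M̂` at `(1,1)`. -/
noncomputable def Wxy (r h t f1 f3 f5 : ℝ) : ℝ :=
  deriv (fun y => deriv (fun x' => W2 r h t f1 f3 f5 x' y) 0) 0

/-- `∂ₓ∂ᵧW` at the origin: the `τ̂ρ̂` entry of the canonical Hessian `M̂` at `(1,1)`. -/
noncomputable def Wyx (r h t f1 f3 f5 : ℝ) : ℝ :=
  deriv (fun x => deriv (fun y' => W2 r h t f1 f3 f5 x y') 0) 0

/-- `∂ᵧᵧW` at the origin: the `τ̂τ̂` entry of the canonical Hessian `M̂` at `(1,1)`. -/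
noncomputable def Wyy (r h t f1 f3 f5 : ℝ) : ℝ :=
  deriv (fun y => deriv (fun y' => W2 r h t f1 f3 f5 0 y') y) 0

/-- The coefficients of the six monomials `ρ ^ p i * τ ^ q i` of `V2`. -/
noncomputable def coeffV (r h t f1 f3 f5 : ℝ) : Fin 6 → ℝ :=
  ![-r / 2, h / 4, -t / 12, f1 / 4, f3 / 4, f5 / 4]

/-- The exponents of `ρ` in the six monomials of `V2`. -/
noncomputable def expRho : Fin 6 → ℝ := ![-1, -3, -(1/2), 2, 0, -2]

/-- The exponents of `τ` in the six monomials of `V2`. -/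
noncomputable def expTau : Fin 6 → ℝ := ![-2, -2, -3, -4, -4, -4]

/-- No positivity of `ρ`, `τ` is needed: the products `ρ ^ p * τ ^ q` are never merged, and
`ρ ^ (0 : ℝ) = 1` for every `ρ`. -/
lemma V2_eq_sum (r h t f1 f3 f5 ρ τ : ℝ) :
    V2 r h t f1 f3 f5 ρ τ
      = ∑ i, coeffV r h t f1 f3 f5 i * (ρ ^ expRho i * τ ^ expTau i) := by
  simp only [Fin.sum_univ_six, coeffV, expRho, expTau, V2, Matrix.cons_val, Real.rpow_zero]
  ring

lemma W2_eq_sum (r h t f1 f3 f5 x y : ℝ) :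
    W2 r h t f1 f3 f5 x y
      = ∑ i, coeffV r h t f1 f3 f5 i *
          (Real.exp (√(2/3) * expRho i * x) * Real.exp (expTau i / √2 * y)) := by
  rw [W2, V2_eq_sum]
  refine Finset.sum_congr rfl fun i _ => ?_
  rw [← Real.exp_mul, ← Real.exp_mul]
  ring_nf

lemma deriv_expSum_fst {ι : Type*} [Fintype ι] (c a b : ι → ℝ) (x y : ℝ) :
    deriv (fun x' => ∑ i, c i * (Real.exp (a i * x') * Real.exp (b i * y))) x
      = ∑ i, c i * a i * (Real.exp (a i * x) * Real.exp (b i * y)) := by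
  refine HasDerivAt.deriv (HasDerivAt.fun_sum fun i _ => ?_)
  have h := ((((hasDerivAt_id x).const_mul (a i)).exp.mul_const
    (Real.exp (b i * y))).const_mul (c i))
  simp only [id, mul_one] at h
  exact h.congr_deriv (by ring)

lemma deriv_expSum_snd {ι : Type*} [Fintype ι] (c a b : ι → ℝ) (x y : ℝ) :
    deriv (fun y' => ∑ i, c i * (Real.exp (a i * x) * Real.exp (b i * y'))) y
      = ∑ i, c i * b i * (Real.exp (a i * x) * Real.exp (b i * y)) := by
  simpa only [mul_comm (Real.exp (a _ * x))] using deriv_expSum_fst c b a y x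

lemma deriv_powSum_one {ι : Type*} [Fintype ι] (c p : ι → ℝ) :
    deriv (fun x : ℝ => ∑ i, c i * x ^ p i) 1 = ∑ i, c i * p i := by
  refine HasDerivAt.deriv (HasDerivAt.fun_sum fun i _ => ?_)
  have h := (Real.hasDerivAt_rpow_const (x := 1) (p := p i) (Or.inl one_ne_zero)).const_mul (c i)
  simpa using h

lemma Wxx_eq (r h t f1 f3 f5 : ℝ) :
    Wxx r h t f1 f3 f5 = 2 / 3 * ∑ i, coeffV r h t f1 f3 f5 i * expRho i ^ 2 := by
  have hs : √(2/3 : ℝ) ^ 2 = 2 / 3 := Real.sq_sqrt (by norm_num)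
  simp only [Wxx, W2_eq_sum, deriv_expSum_fst]
  simp only [mul_zero, Real.exp_zero, mul_one]
  rw [Finset.mul_sum]
  exact Finset.sum_congr rfl fun i _ => by
    linear_combination coeffV r h t f1 f3 f5 i * expRho i ^ 2 * hs

lemma Wyy_eq (r h t f1 f3 f5 : ℝ) :
    Wyy r h t f1 f3 f5 = 1 / 2 * ∑ i, coeffV r h t f1 f3 f5 i * expTau i ^ 2 := by
  have hs : (1 / √2 : ℝ) ^ 2 = 1 / 2 := by rw [div_pow, Real.sq_sqrt (by norm_num), one_pow]
  simp only [Wyy, W2_eq_sum, deriv_expSum_snd]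
  simp only [mul_zero, Real.exp_zero, mul_one]
  rw [Finset.mul_sum]
  exact Finset.sum_congr rfl fun i _ => by
    linear_combination coeffV r h t f1 f3 f5 i * expTau i ^ 2 * hs

lemma Wxy_eq (r h t f1 f3 f5 : ℝ) :
    Wxy r h t f1 f3 f5
      = √(2/3) / √2 * ∑ i, coeffV r h t f1 f3 f5 i * (expRho i * expTau i) := by
  simp only [Wxy, W2_eq_sum, deriv_expSum_fst, deriv_expSum_snd]
  simp only [mul_zero, Real.exp_zero, mul_one]
  rw [Finset.mul_sum]
  exact Finset.sum_congr rfl fun i _ => by ring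

/-- At an extremum of `V` at `(1,1)`, the determinant of the canonical
Hessian `M̂ = [[∂_ρ̂²V, ∂_ρ̂∂_τ̂V], [∂_ρ̂∂_τ̂V, ∂_τ̂²V]]` satisfies
`4·det M̂ = (2/81)·[3·f₅·(−24·f₅ + t + 72·f₁) − 36·f₁·(4·f₁ − r)] + (2/81)·(6·r + t)·(18·f₁ + 12·r + t)`. -/
theorem two_field_det_identity (r h t f1 f3 f5 : ℝ)
    (hρ : deriv (fun x => V2 r h t f1 f3 f5 x 1) 1 = 0)
    (hτ : deriv (fun y => V2 r h t f1 f3 f5 1 y) 1 = 0) :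
    4 * (Wxx r h t f1 f3 f5 * Wyy r h t f1 f3 f5 - (Wxy r h t f1 f3 f5)^2)
      = (2/81) * (3 * f5 * (-24 * f5 + t + 72 * f1) - 36 * f1 * (4 * f1 - r))
        + (2/81) * (6 * r + t) * (18 * f1 + 12 * r + t) := by
  simp only [V2_eq_sum, Real.one_rpow, mul_one, one_mul, deriv_powSum_one] at hρ hτ
  have hxy : (√(2/3 : ℝ) / √2) ^ 2 = 1 / 3 := by
    rw [div_pow, Real.sq_sqrt (by norm_num), Real.sq_sqrt (by norm_num)]
    norm_num
  rw [Wxx_eq, Wyy_eq, Wxy_eq, mul_pow, hxy]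
  simp only [Fin.sum_univ_six, coeffV, expRho, expTau, Matrix.cons_val] at hρ hτ ⊢
  obtain rfl : h = 2 / 3 * r + t / 18 + 2 / 3 * f1 - 2 / 3 * f5 := by linarith
  obtain rfl : f3 = r + t / 4 - f1 - f5 - (2 / 3 * r + t / 18 + 2 / 3 * f1 - 2 / 3 * f5) / 2 := by
    linarith
  ring
end

section
/- Let V(ρ, τ) be the two-field potential with parameters r, h, t, f₁, f₃, f₅. Then, evaluating at (ρ, τ) = (1, 1): 2·[ −4·V − (4/3)·ρ∂_ρV − τ∂_τV + ∂_ρ̂²V ] = 4·h + t/36 + (8/3)·f₅. Consequently, if ∂_ρV = ∂_τV = 0 at (1,1), V(1,1) > 0, h ≥ 0, f₅ ≥ 0 and t > 0, then ∂_ρ̂²V|_{(1,1)} > 0. -/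
/-- The function differentiated is a general combination of the powers of `ρ` occurring in `V2`.
Up to the factor `1/x` its derivative is again such a combination, so the lemma applies both to `V`
and to `ρ∂_ρV`. -/
theorem hasDerivAt_slice (a b c d e k x : ℝ) (hx : 0 < x) :
    HasDerivAt (fun x : ℝ => a * x ^ (-1 : ℝ) + b * x ^ (-3 : ℝ) + c * x ^ (-(1/2) : ℝ)
        + d * x ^ (2 : ℝ) + e * x ^ (-2 : ℝ) + k)
      ((-a * x ^ (-1 : ℝ) + -3 * b * x ^ (-3 : ℝ) + -(1/2) * c * x ^ (-(1/2) : ℝ)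
        + 2 * d * x ^ (2 : ℝ) + -2 * e * x ^ (-2 : ℝ)) / x) x := by
  have key : ∀ p : ℝ, HasDerivAt (fun x : ℝ => x ^ p) (p * (x ^ p / x)) x := fun p => by
    have := Real.hasDerivAt_rpow_const (x := x) (p := p) (Or.inl hx.ne')
    rwa [Real.rpow_sub_one hx.ne'] at this
  have := ((((((key (-1)).const_mul a).add ((key (-3)).const_mul b)).add
    ((key (-(1/2))).const_mul c)).add ((key 2).const_mul d)).add
    ((key (-2)).const_mul e)).add_const k
  refine this.congr_deriv ?_
  ring

theorem V2_rho_slice (r h t f1 f3 f5 x : ℝ) :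
    V2 r h t f1 f3 f5 x 1 = -r/2 * x ^ (-1 : ℝ) + h/4 * x ^ (-3 : ℝ)
      + -t/12 * x ^ (-(1/2) : ℝ) + f1/4 * x ^ (2 : ℝ) + f5/4 * x ^ (-2 : ℝ) + f3/4 := by
  simp only [V2, Real.one_rpow]
  ring

theorem rDr_V2 (r h t f1 f3 f5 x : ℝ) (hx : 0 < x) :
    rDr (V2 r h t f1 f3 f5) x 1 = r/2 * x ^ (-1 : ℝ) + -3*h/4 * x ^ (-3 : ℝ)
      + t/24 * x ^ (-(1/2) : ℝ) + f1/2 * x ^ (2 : ℝ) + -f5/2 * x ^ (-2 : ℝ) + 0 := by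
  simp only [rDr, V2_rho_slice]
  rw [(hasDerivAt_slice _ _ _ _ _ _ x hx).deriv, mul_div_cancel₀ _ hx.ne']
  ring

theorem rDr_rDr_V2 (r h t f1 f3 f5 : ℝ) :
    rDr (rDr (V2 r h t f1 f3 f5)) 1 1 = -r/2 + 9*h/4 - t/48 + f1 + f5 := by
  -- `rDr_V2` is only valid for `x > 0`, hence the passage to germs at `1`.
  have hev := (eventually_gt_nhds (zero_lt_one' ℝ)).mono fun x hx =>
    rDr_V2 r h t f1 f3 f5 x hx
  rw [rDr, Filter.EventuallyEq.deriv_eq hev, (hasDerivAt_slice _ _ _ _ _ _ 1 one_pos).deriv]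
  simp only [Real.one_rpow]
  ring

theorem tDt_V2 (r h t f1 f3 f5 : ℝ) :
    tDt (V2 r h t f1 f3 f5) 1 1 = r - h/2 + t/4 - (f1 + f3 + f5) := by
  have key : ∀ p : ℝ, HasDerivAt (fun x : ℝ => x ^ p) p 1 := fun p => by
    simpa using Real.hasDerivAt_rpow_const (x := 1) (p := p) (Or.inl one_ne_zero)
  have hV : (fun y => V2 r h t f1 f3 f5 1 y) = fun y : ℝ => (-r/2 + h/4) * y ^ (-2 : ℝ)
      + -t/12 * y ^ (-3 : ℝ) + (f1 + f3 + f5)/4 * y ^ (-4 : ℝ) := by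
    funext y
    simp only [V2, Real.one_rpow]
    ring
  have := (((key (-2)).const_mul (-r/2 + h/4)).add ((key (-3)).const_mul (-t/12))).add
    ((key (-4)).const_mul ((f1 + f3 + f5)/4))
  rw [tDt, hV]
  refine (congrArg (1 * ·) this.deriv).trans ?_
  ring

/-- At `(ρ, τ) = (1, 1)`:
`2·[ −4·V − (4/3)·ρ∂_ρV − τ∂_τV + ∂_ρ̂²V ] = 4·h + t/36 + (8/3)·f₅`, and consequently,
at an extremum with `V(1,1) > 0`, `h ≥ 0`, `f₅ ≥ 0`, `t > 0`, one has `∂_ρ̂²V|₍₁,₁₎ > 0`. -/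
theorem two_field_rho_hat_sq_identity (r h t f1 f3 f5 : ℝ) :
    (2 * (-4 * V2 r h t f1 f3 f5 1 1 - (4/3) * rDr (V2 r h t f1 f3 f5) 1 1
        - tDt (V2 r h t f1 f3 f5) 1 1 + (2/3) * rDr (rDr (V2 r h t f1 f3 f5)) 1 1)
      = 4 * h + t / 36 + (8/3) * f5) ∧
    ((deriv (fun x => V2 r h t f1 f3 f5 x 1) 1 = 0 ∧
        deriv (fun y => V2 r h t f1 f3 f5 1 y) 1 = 0) →
      0 < V2 r h t f1 f3 f5 1 1 → 0 ≤ h → 0 ≤ f5 → 0 < t →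
      0 < (2/3) * rDr (rDr (V2 r h t f1 f3 f5)) 1 1) := by
  have hid : 2 * (-4 * V2 r h t f1 f3 f5 1 1 - (4/3) * rDr (V2 r h t f1 f3 f5) 1 1
        - tDt (V2 r h t f1 f3 f5) 1 1 + (2/3) * rDr (rDr (V2 r h t f1 f3 f5)) 1 1)
      = 4 * h + t / 36 + (8/3) * f5 := by
    rw [rDr_V2 _ _ _ _ _ _ _ one_pos, rDr_rDr_V2, tDt_V2, V2_rho_slice]
    simp only [Real.one_rpow]
    ring
  refine ⟨hid, ?_⟩
  rintro ⟨hρ, hτ⟩ hV hh hf ht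
  have h1 : rDr (V2 r h t f1 f3 f5) 1 1 = 0 := by rw [rDr, hρ, mul_zero]
  have h2 : tDt (V2 r h t f1 f3 f5) 1 1 = 0 := by rw [tDt, hτ, mul_zero]
  rw [h1, h2] at hid
  linarith
end

section
/- Let V(ρ, τ) be the two-field potential with parameters r, h, t, f₁, f₃, f₅. With the coefficients b_ρ = 65/8, b_τ = 325/16, c_ρ = −1, c_τ = −5/2, the following identity of functions on (0,∞)² holds: 2·[ V + b_ρ·ρ∂_ρV + b_τ·τ∂_τV + (c_ρ·ρ∂_ρ + c_τ·τ∂_τ)²V ] = (95/4)·f₅·τ⁻⁴·ρ⁻² + (79/8)·f₃·τ⁻⁴ + (47/4)·r·τ⁻²·ρ⁻¹. -/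
/-- The first-order operator `c_ρ·ρ∂_ρ + c_τ·τ∂_τ` with `c_ρ = −1`, `c_τ = −5/2`. -/
noncomputable def Dc14 (F : ℝ → ℝ → ℝ) (ρ τ : ℝ) : ℝ :=
  (-1) * rDr F ρ τ + (-(5/2)) * tDt F ρ τ

/-- The generalized polynomial `∑ i, c i * ρ ^ a i * τ ^ b i` with real exponents. -/
noncomputable def monoSum {n : ℕ} (a b c : Fin n → ℝ) (ρ τ : ℝ) : ℝ :=
  ∑ i, c i * (ρ ^ a i * τ ^ b i)

lemma mul_deriv_rpow_sum {n : ℕ} (a c : Fin n → ℝ) {x : ℝ} (hx : 0 < x) :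
    x * deriv (fun y : ℝ => ∑ i, c i * y ^ a i) x = ∑ i, a i * (c i * x ^ a i) := by
  have hd : HasDerivAt (fun y : ℝ => ∑ i, c i * y ^ a i)
      (∑ i, c i * (a i * x ^ (a i - 1))) x :=
    HasDerivAt.fun_sum fun i _ =>
      (Real.hasDerivAt_rpow_const (Or.inl hx.ne')).const_mul (c i)
  rw [hd.deriv, Finset.mul_sum]
  refine Finset.sum_congr rfl fun i _ => ?_
  rw [Real.rpow_sub_one hx.ne']
  field_simp

lemma rDr_monoSum {n : ℕ} (a b c : Fin n → ℝ) {ρ τ : ℝ} (hρ : 0 < ρ) :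
    rDr (monoSum a b c) ρ τ = monoSum a b (fun i => a i * c i) ρ τ := by
  have hf : (fun x => monoSum a b c x τ) = fun x => ∑ i, (c i * τ ^ b i) * x ^ a i := by
    funext x
    exact Finset.sum_congr rfl fun i _ => by ring
  rw [rDr, hf, mul_deriv_rpow_sum a _ hρ]
  exact Finset.sum_congr rfl fun i _ => by ring

lemma tDt_monoSum {n : ℕ} (a b c : Fin n → ℝ) {ρ τ : ℝ} (hτ : 0 < τ) :
    tDt (monoSum a b c) ρ τ = monoSum a b (fun i => b i * c i) ρ τ := by
  have hf : (fun y => monoSum a b c ρ y) = fun y => ∑ i, (c i * ρ ^ a i) * y ^ b i := by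
    funext y
    exact Finset.sum_congr rfl fun i _ => by ring
  rw [tDt, hf, mul_deriv_rpow_sum b _ hτ]
  exact Finset.sum_congr rfl fun i _ => by ring

lemma Dc14_monoSum {n : ℕ} (a b c : Fin n → ℝ) {ρ τ : ℝ} (hρ : 0 < ρ) (hτ : 0 < τ) :
    Dc14 (monoSum a b c) ρ τ = monoSum a b (fun i => (-a i - 5 / 2 * b i) * c i) ρ τ := by
  rw [Dc14, rDr_monoSum a b c hρ, tDt_monoSum a b c hτ]
  simp only [monoSum, Finset.mul_sum, ← Finset.sum_add_distrib]
  exact Finset.sum_congr rfl fun i _ => by ring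

/-- `Dc14` is local: its value at a point of the open quadrant depends only on the function there.
This allows `Dc14_monoSum`, an identity valid only on the quadrant, to be iterated. -/
lemma Dc14_congr {F G : ℝ → ℝ → ℝ} (hFG : ∀ x y : ℝ, 0 < x → 0 < y → F x y = G x y)
    {ρ τ : ℝ} (hρ : 0 < ρ) (hτ : 0 < τ) : Dc14 F ρ τ = Dc14 G ρ τ := by
  have h1 : (fun x => F x τ) =ᶠ[nhds ρ] fun x => G x τ := by
    filter_upwards [lt_mem_nhds hρ] with x hx using hFG x τ hx hτ
  have h2 : (fun y => F ρ y) =ᶠ[nhds τ] fun y => G ρ y := by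
    filter_upwards [lt_mem_nhds hτ] with y hy using hFG ρ y hρ hy
  rw [Dc14, Dc14, rDr, rDr, tDt, tDt, h1.deriv_eq, h2.deriv_eq]

lemma V2_eq_monoSum (r h t f1 f3 f5 : ℝ) :
    V2 r h t f1 f3 f5 = monoSum ![-1, -3, -(1/2), 2, 0, -2] ![-2, -2, -3, -4, -4, -4]
      ![-r / 2, h / 4, -t / 12, f1 / 4, f3 / 4, f5 / 4] := by
  funext ρ τ
  simp only [V2, monoSum, Fin.sum_univ_six, Matrix.cons_val, Real.rpow_zero]
  ring

/-- With `b_ρ = 65/8`, `b_τ = 325/16`, `c_ρ = −1`, `c_τ = −5/2`, on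
`(0,∞)²` one has the identity
`2·[ V + b_ρ·ρ∂_ρV + b_τ·τ∂_τV + (c_ρ·ρ∂_ρ + c_τ·τ∂_τ)²V ]
  = (95/4)·f₅·τ⁻⁴·ρ⁻² + (79/8)·f₃·τ⁻⁴ + (47/4)·r·τ⁻²·ρ⁻¹`. -/
theorem two_field_C3_combination (r h t f1 f3 f5 : ℝ) :
    ∀ ρ τ : ℝ, 0 < ρ → 0 < τ →
      2 * (V2 r h t f1 f3 f5 ρ τ + (65/8) * rDr (V2 r h t f1 f3 f5) ρ τ
        + (325/16) * tDt (V2 r h t f1 f3 f5) ρ τ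
        + Dc14 (Dc14 (V2 r h t f1 f3 f5)) ρ τ)
      = (95/4) * f5 * τ ^ (-4 : ℝ) * ρ ^ (-2 : ℝ)
        + (79/8) * f3 * τ ^ (-4 : ℝ)
        + (47/4) * r * τ ^ (-2 : ℝ) * ρ ^ (-1 : ℝ) := by
  intro ρ τ hρ hτ
  rw [V2_eq_monoSum, Dc14_congr (fun x y hx hy => Dc14_monoSum _ _ _ hx hy) hρ hτ,
    Dc14_monoSum _ _ _ hρ hτ, rDr_monoSum _ _ _ hρ, tDt_monoSum _ _ _ hτ]
  simp only [monoSum, Fin.sum_univ_six, Matrix.cons_val, Real.rpow_zero]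
  ring
end

section
/- Let V(ρ, τ) be the two-field potential with parameters r, h, t, f₁, f₃, f₅, and suppose ∂_ρV = ∂_τV = 0 at (ρ, τ) = (1, 1) with V(1,1) > 0 (a de Sitter extremum). Assume f₃ ≥ 0, f₅ ≥ 0 and the condition (C3): −r ≥ (79/94)·f₃ + (95/47)·f₅. Then the minimal eigenvalue λ of the canonical Hessian M̂ at (1,1) satisfies λ ≤ −V(1,1)/14; in particular there is a tachyon and the bound η_V = λ/V(1,1) ≤ −1/14 holds. -/
/-- A finite sum of exponentials `∑ cᵢ exp(pᵢ x + qᵢ y)`, the form of the potential in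
logarithmic field coordinates. -/
noncomputable def expSum (c p q : Fin 6 → ℝ) (x y : ℝ) : ℝ :=
  ∑ i, c i * Real.exp (p i * x + q i * y)

theorem deriv_expSum_left (c p q : Fin 6 → ℝ) (x y : ℝ) :
    deriv (fun x' => expSum c p q x' y) x = expSum (fun i => c i * p i) p q x y := by
  unfold expSum
  refine HasDerivAt.deriv (HasDerivAt.fun_sum fun i _ => ?_)
  have h := ((((hasDerivAt_id x).const_mul (p i)).add_const (q i * y)).exp).const_mul (c i)
  refine h.congr_deriv ?_
  simp
  ring

theorem deriv_expSum_right (c p q : Fin 6 → ℝ) (x y : ℝ) :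
    deriv (fun y' => expSum c p q x y') y = expSum (fun i => c i * q i) p q x y := by
  unfold expSum
  refine HasDerivAt.deriv (HasDerivAt.fun_sum fun i _ => ?_)
  have h := ((((hasDerivAt_id y).const_mul (q i)).const_add (p i * x)).exp).const_mul (c i)
  refine h.congr_deriv ?_
  simp
  ring

/-- The coefficients of the six terms of `V`. -/
noncomputable def coeffs (r h t f1 f3 f5 : ℝ) : Fin 6 → ℝ :=
  ![-r / 2, h / 4, -t / 12, f1 / 4, f3 / 4, f5 / 4]

/-- The powers of `ρ` in the six terms of `V`, times `a`. -/
noncomputable def rhoExp (a : ℝ) : Fin 6 → ℝ :=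
  ![-a, -3 * a, -(1/2) * a, 2 * a, 0, -2 * a]

/-- The powers of `τ` in the six terms of `V`, times `b`. -/
noncomputable def tauExp (b : ℝ) : Fin 6 → ℝ :=
  ![-2 * b, -2 * b, -3 * b, -4 * b, -4 * b, -4 * b]

theorem V2_exp (r h t f1 f3 f5 a b x y : ℝ) :
    V2 r h t f1 f3 f5 (Real.exp (a * x)) (Real.exp (b * y)) =
      expSum (coeffs r h t f1 f3 f5) (rhoExp a) (tauExp b) x y := by
  simp only [V2, expSum, coeffs, rhoExp, tauExp, Fin.sum_univ_six, ← Real.exp_mul, Real.exp_add]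
  simp
  ring_nf

theorem W2_eq (r h t f1 f3 f5 : ℝ) :
    W2 r h t f1 f3 f5 = expSum (coeffs r h t f1 f3 f5) (rhoExp √(2/3)) (tauExp (√2)⁻¹) := by
  funext x y
  rw [← V2_exp, W2, div_eq_inv_mul y]

theorem deriv_V2_rho (r h t f1 f3 f5 : ℝ) :
    deriv (fun x => V2 r h t f1 f3 f5 x 1) 1 =
      (1/2) * (r - (3/2) * h + t / 12 + f1 - f5) := by
  unfold V2
  have d (p : ℝ) : HasDerivAt (fun x : ℝ => x ^ p) p 1 := by
    simpa using Real.hasDerivAt_rpow_const (x := 1) (p := p) (Or.inl one_ne_zero)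
  simp only [Real.one_rpow]
  have key := ((((((d (-1)).mul_const r).sub (((d (-3)).const_mul (1/2)).mul_const h)).const_mul
    (-1)).sub ((((d (-(1/2))).const_mul 1).mul_const t).div_const 6)).add
    (((((d 2).mul_const f1).add_const f3).add ((d (-2)).mul_const f5)).const_mul
      ((1/2) * 1))).const_mul (1/2)
  refine (key.congr_deriv ?_).deriv
  ring

theorem deriv_V2_tau (r h t f1 f3 f5 : ℝ) :
    deriv (fun y => V2 r h t f1 f3 f5 1 y) 1 =
      (1/2) * (2 * r - h + t / 2 - 2 * (f1 + f3 + f5)) := by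
  unfold V2
  have d (p : ℝ) : HasDerivAt (fun x : ℝ => x ^ p) p 1 := by
    simpa using Real.hasDerivAt_rpow_const (x := 1) (p := p) (Or.inl one_ne_zero)
  simp only [Real.one_rpow]
  have key := ((((d (-2)).neg.mul_const (1 * r - (1/2) * 1 * h)).sub
    ((((d (-3)).mul_const 1).mul_const t).div_const 6)).add
    (((d (-4)).const_mul (1/2)).mul_const (1 * f1 + f3 + 1 * f5))).const_mul (1/2)
  refine (key.congr_deriv ?_).deriv
  ring

/-- Rayleigh bound: a real symmetric `2 × 2` matrix whose quadratic form is at most `c |v|²` at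
some `v = (x, y) ≠ 0` has an eigenvalue at most `c`. -/
theorem exists_eigenvalue_le (a b d c x y : ℝ) (hxy : 0 < x ^ 2 + y ^ 2)
    (hQ : a * x ^ 2 + 2 * b * x * y + d * y ^ 2 ≤ c * (x ^ 2 + y ^ 2)) :
    ∃ μ : ℝ, (∃ v : Fin 2 → ℝ, v ≠ 0 ∧ (!![a, b; b, d]).mulVec v = μ • v) ∧ μ ≤ c := by
  set s := √((a - d) ^ 2 + 4 * b ^ 2) with hs
  have hs0 : 0 ≤ s := Real.sqrt_nonneg _
  have hs2 : s ^ 2 = (a - d) ^ 2 + 4 * b ^ 2 := Real.sq_sqrt (by positivity)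
  have hsa : |a - d| ≤ s := Real.abs_le_sqrt (by nlinarith [sq_nonneg b])
  obtain ⟨h1, h2⟩ := abs_le.mp hsa
  -- the smaller root of the characteristic polynomial
  obtain ⟨μ, hμ⟩ : ∃ μ, μ = (a + d - s) / 2 := ⟨_, rfl⟩
  have hchar : (a - μ) * (d - μ) = b ^ 2 := by rw [hμ]; nlinarith
  have ha : 0 ≤ a - μ := by rw [hμ]; linarith
  have hd : 0 ≤ d - μ := by rw [hμ]; linarith
  refine ⟨μ, ?_, ?_⟩
  · by_cases hb : b = 0
    · subst hb
      rcases mul_eq_zero.mp (hchar.trans (by norm_num)) with h | h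
      · refine ⟨![1, 0], fun h0 => by simpa using congrFun h0 0, ?_⟩
        ext i
        fin_cases i <;> simp [Matrix.mulVec, dotProduct, Fin.sum_univ_two]
        linarith
      · refine ⟨![0, 1], fun h0 => by simpa using congrFun h0 1, ?_⟩
        ext i
        fin_cases i <;> simp [Matrix.mulVec, dotProduct, Fin.sum_univ_two]
        linarith
    · refine ⟨![b, μ - a], fun h0 => hb (by simpa using congrFun h0 0), ?_⟩
      ext i
      fin_cases i <;> simp [Matrix.mulVec, dotProduct, Fin.sum_univ_two]
      · ring
      · linarith
  · -- `M - μ` is positive semidefinite, having nonnegative trace and zero determinant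
    have hpsd : 0 ≤ (a - μ) * x ^ 2 + 2 * b * x * y + (d - μ) * y ^ 2 := by
      have e : ((a - μ) + (d - μ)) * ((a - μ) * x ^ 2 + 2 * b * x * y + (d - μ) * y ^ 2) =
          ((a - μ) * x + b * y) ^ 2 + (b * x + (d - μ) * y) ^ 2 := by
        linear_combination (x ^ 2 + y ^ 2) * hchar
      rcases (add_nonneg ha hd).eq_or_lt with h0 | h0
      · have ha0 : a - μ = 0 := by linarith
        have hd0 : d - μ = 0 := by linarith
        have hb0 : b = 0 := by
          rw [ha0, zero_mul] at hchar
          exact pow_eq_zero_iff two_ne_zero |>.mp hchar.symm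
        rw [ha0, hd0, hb0]
        simp
      · exact nonneg_of_mul_nonneg_right (e ▸ by positivity) h0
    refine le_of_mul_le_mul_right ?_ hxy
    linarith

/-- At a de Sitter extremum of `V` at `(1,1)` (first derivatives vanish,
`V(1,1) > 0`) with `f₃ ≥ 0`, `f₅ ≥ 0` and condition (C3): `−r ≥ (79/94)·f₃ + (95/47)·f₅`,
the minimal eigenvalue `λ` of the canonical Hessian `M̂` at `(1,1)` satisfies
`λ ≤ −V(1,1)/14`: there is an eigenvalue `μ ≤ −V(1,1)/14`, in particular a tachyon, and
`η_V = μ/V(1,1) ≤ −1/14`. -/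
theorem two_field_C3_tachyon (r h t f1 f3 f5 : ℝ)
    (hρ : deriv (fun x => V2 r h t f1 f3 f5 x 1) 1 = 0)
    (hτ : deriv (fun y => V2 r h t f1 f3 f5 1 y) 1 = 0)
    (hV : 0 < V2 r h t f1 f3 f5 1 1)
    (hf3 : 0 ≤ f3) (hf5 : 0 ≤ f5)
    (hC3 : -r ≥ (79/94) * f3 + (95/47) * f5) :
    ∃ μ : ℝ, (∃ v : Fin 2 → ℝ, v ≠ 0 ∧
        (!![Wxx r h t f1 f3 f5, Wxy r h t f1 f3 f5;
            Wyx r h t f1 f3 f5, Wyy r h t f1 f3 f5]).mulVec v = μ • v) ∧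
      μ ≤ -(V2 r h t f1 f3 f5 1 1) / 14 ∧
      μ / V2 r h t f1 f3 f5 1 1 ≤ -(1/14) := by
  rw [deriv_V2_rho] at hρ
  rw [deriv_V2_tau] at hτ
  have hVval : V2 r h t f1 f3 f5 1 1 =
      (1/2) * (-r + h / 2 - t / 6 + (1/2) * (f1 + f3 + f5)) := by
    simp [V2]
    ring
  set U := V2 r h t f1 f3 f5 1 1
  have ha : √(2/3 : ℝ) * √(2/3 : ℝ) = 2/3 := Real.mul_self_sqrt (by norm_num)
  have hb : (√2 : ℝ)⁻¹ * (√2 : ℝ)⁻¹ = 1/2 := by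
    rw [← mul_inv, Real.mul_self_sqrt (by norm_num)]
    norm_num
  have hpa : √(2/3 : ℝ) ≠ 0 := by positivity
  have hpb : (√2 : ℝ)⁻¹ ≠ 0 := by positivity
  have exx : Wxx r h t f1 f3 f5 = √(2/3) * √(2/3) *
      ((1/2) * (-r + (9/2) * h - t / 24 + 2 * f1 + 2 * f5)) := by
    simp only [Wxx, W2_eq, deriv_expSum_left]
    simp [expSum, coeffs, rhoExp, tauExp, Fin.sum_univ_six]
    ring
  have exy : Wxy r h t f1 f3 f5 = √(2/3) * (√2)⁻¹ *
      ((1/2) * (-2 * r + 3 * h - t / 4 - 4 * f1 + 4 * f5)) := by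
    simp only [Wxy, W2_eq, deriv_expSum_left, deriv_expSum_right]
    simp [expSum, coeffs, rhoExp, tauExp, Fin.sum_univ_six]
    ring
  have eyx : Wyx r h t f1 f3 f5 = Wxy r h t f1 f3 f5 := by
    simp only [Wyx, Wxy, W2_eq, deriv_expSum_left, deriv_expSum_right, mul_right_comm]
  have eyy : Wyy r h t f1 f3 f5 = (√2)⁻¹ * (√2)⁻¹ *
      ((1/2) * (-4 * r + 2 * h - (3/2) * t + 8 * (f1 + f3 + f5))) := by
    simp only [Wyy, W2_eq, deriv_expSum_right]
    simp [expSum, coeffs, rhoExp, tauExp, Fin.sum_univ_six]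
    ring
  rw [eyx]
  generalize √(2/3 : ℝ) = a at *
  generalize (√2 : ℝ)⁻¹ = b at *
  -- `(3a, 10b)` is the direction `(2/a, 5/b)`, i.e. `(2, 5)` in `(log ρ, log τ)`
  obtain ⟨μ, hv, hμ⟩ := exists_eigenvalue_le (Wxx r h t f1 f3 f5) (Wxy r h t f1 f3 f5)
    (Wyy r h t f1 f3 f5) (-U / 14) (3 * a) (10 * b) (by positivity) (by
      have e1 : (3 * a) ^ 2 = 6 := by linear_combination 9 * ha
      have e2 : (10 * b) ^ 2 = 50 := by linear_combination 100 * hb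
      have e3 (z : ℝ) : 2 * (a * b * z) * (3 * a) * (10 * b) = 20 * z := by
        linear_combination 60 * z * (b * b) * ha + 40 * z * hb
      rw [exx, exy, eyy, ha, hb, e1, e2, e3]
      linarith)
  refine ⟨μ, hv, hμ, ?_⟩
  rw [div_le_iff₀ hV]
  linarith
end

section
/- Let V(ρ, τ, σ₁, σ₂) be the four-field potential with parameters R₁,…,R₆, h₀, h₂, t₁, t₂, t₃, f₁, f₃, f₅. Then, evaluating at (ρ, τ, σ₁, σ₂) = (1, 1, 1, 1): 2·[ −(8/3)·V − (1/3)·ρ∂_ρV − (5/6)·τ∂_τV + (1/6)·σ₁∂_{σ₁}V + (1/6)·σ₂∂_{σ₂}V + ∂_{σ̂₁}²V ] = (1/3)·( f₁ + f₃ + 5·f₅ − 18·R₃ − t₃ ), where ∂_{σ̂₁} = (1/(2√3))·(σ₁∂_{σ₁} + σ₂∂_{σ₂}). Consequently, if all four first derivatives of V vanish at (1,1,1,1), V(1,1,1,1) > 0, f₁ > 0, f₃ ≥ 0, f₅ ≥ 0, R₃ ≤ 0 and t₃ ≤ 0, then ∂_{σ̂₁}²V|_{(1,1,1,1)} > 0.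 -/
/-!
On the positive orthant `V` is a sum of 14 monomials `c · ρ^a τ^b σ₁^p σ₂^q`. Each of the operators
`ρ∂_ρ`, `τ∂_τ`, `σ₁∂_{σ₁}`, `σ₂∂_{σ₂}` is diagonal on monomials, multiplying the coefficient by the
corresponding exponent, so `∂_{σ̂₁}²` multiplies it by `(p + q)² / 12`. The combination in the
theorem therefore multiplies each coefficient by
`−8/3 − a/3 − 5b/6 + (p + q)/6 + (p + q)²/12`, which is zero except on the
`R₃`, `t₃`, `f₁`, `f₃`, `f₅` terms. At a critical point with `V > 0` the identity expresses
`∂_{σ̂₁}²V` as `(8/3) V` plus a positive quantity.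

`IsMonomialSum` records such an expansion, and `euler_deriv` gives the diagonal action.
-/

/-- The four-field scalar potential `V(ρ, τ, σ₁, σ₂)` (with `M_p = 1`), with parameters
`R₁,…,R₆` (curvature terms), `h₀ = |H^(0)₁|²`, `h₂ = |H^(2)₁|²`, `t₁, t₂, t₃ = g_s T₁₀ᴵ`,
`f₁, f₃, f₅ = g_s²|F_q|²`:
`2·V = −τ⁻²ρ⁻¹·(R₁σ₁⁻⁸σ₂⁴ + R₂σ₁⁴σ₂⁻⁸ + R₃σ₁⁴σ₂⁴ + R₄σ₁⁻²σ₂⁻² + R₅σ₁⁴σ₂⁻² + R₆σ₁⁻²σ₂⁴)`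
`+ (1/2)τ⁻²ρ⁻³·(σ₁⁻⁶σ₂⁶·h₀ + σ₁⁶σ₂⁻⁶·h₂) − τ⁻³ρ^(−1/2)·(σ₁⁻⁴σ₂²·t₁ + σ₁²σ₂⁻⁴·t₂ + σ₁²σ₂²·t₃)/6`
`+ (1/2)τ⁻⁴·(ρ²(σ₁σ₂)⁻²·f₁ + f₃ + ρ⁻²(σ₁σ₂)²·f₅)`. -/
noncomputable def V4 (R1 R2 R3 R4 R5 R6 h0 h2 t1 t2 t3 f1 f3 f5 : ℝ)
    (ρ τ s1 s2 : ℝ) : ℝ :=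
  (1/2) * (-(τ ^ (-2 : ℝ)) * ρ ^ (-1 : ℝ) *
      (R1 * s1 ^ (-8 : ℝ) * s2 ^ (4 : ℝ) + R2 * s1 ^ (4 : ℝ) * s2 ^ (-8 : ℝ)
        + R3 * s1 ^ (4 : ℝ) * s2 ^ (4 : ℝ) + R4 * s1 ^ (-2 : ℝ) * s2 ^ (-2 : ℝ)
        + R5 * s1 ^ (4 : ℝ) * s2 ^ (-2 : ℝ) + R6 * s1 ^ (-2 : ℝ) * s2 ^ (4 : ℝ))
    + (1/2) * τ ^ (-2 : ℝ) * ρ ^ (-3 : ℝ) *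
        (s1 ^ (-6 : ℝ) * s2 ^ (6 : ℝ) * h0 + s1 ^ (6 : ℝ) * s2 ^ (-6 : ℝ) * h2)
    - τ ^ (-3 : ℝ) * ρ ^ (-(1/2) : ℝ) *
        (s1 ^ (-4 : ℝ) * s2 ^ (2 : ℝ) * t1 + s1 ^ (2 : ℝ) * s2 ^ (-4 : ℝ) * t2
          + s1 ^ (2 : ℝ) * s2 ^ (2 : ℝ) * t3) / 6
    + (1/2) * τ ^ (-4 : ℝ) *
        (ρ ^ (2 : ℝ) * (s1 * s2) ^ (-2 : ℝ) * f1 + f3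
          + ρ ^ (-2 : ℝ) * (s1 * s2) ^ (2 : ℝ) * f5))

/-- The operator `ρ ∂_ρ` on functions of `(ρ, τ, σ₁, σ₂)`. -/
noncomputable def rD4 (F : ℝ → ℝ → ℝ → ℝ → ℝ) (ρ τ s1 s2 : ℝ) : ℝ :=
  ρ * deriv (fun x => F x τ s1 s2) ρ

/-- The operator `τ ∂_τ` on functions of `(ρ, τ, σ₁, σ₂)`. -/
noncomputable def tD4 (F : ℝ → ℝ → ℝ → ℝ → ℝ) (ρ τ s1 s2 : ℝ) : ℝ :=
  τ * deriv (fun y => F ρ y s1 s2) τ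

/-- The operator `σ₁ ∂_{σ₁}` on functions of `(ρ, τ, σ₁, σ₂)`. -/
noncomputable def s1D4 (F : ℝ → ℝ → ℝ → ℝ → ℝ) (ρ τ s1 s2 : ℝ) : ℝ :=
  s1 * deriv (fun z => F ρ τ z s2) s1

/-- The operator `σ₂ ∂_{σ₂}` on functions of `(ρ, τ, σ₁, σ₂)`. -/
noncomputable def s2D4 (F : ℝ → ℝ → ℝ → ℝ → ℝ) (ρ τ s1 s2 : ℝ) : ℝ :=
  s2 * deriv (fun w => F ρ τ s1 w) s2

/-- The canonical operator `∂_{σ̂₁} = (1/(2√3))·(σ₁∂_{σ₁} + σ₂∂_{σ₂})`. -/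
noncomputable def sig1hatD (F : ℝ → ℝ → ℝ → ℝ → ℝ) (ρ τ s1 s2 : ℝ) : ℝ :=
  (1 / (2 * Real.sqrt 3)) * (s1D4 F ρ τ s1 s2 + s2D4 F ρ τ s1 s2)

/-- On the positive orthant, `F` is the sum of the monomials `c i · ρ^(a i) τ^(b i) σ₁^(p i) σ₂^(q i)`.
Nothing is said about `F` elsewhere: derivatives at points of the open orthant do not see it. -/
def IsMonomialSum {n : ℕ} (F : ℝ → ℝ → ℝ → ℝ → ℝ) (c a b p q : Fin n → ℝ) : Prop :=
  ∀ ρ τ s1 s2 : ℝ, 0 < ρ → 0 < τ → 0 < s1 → 0 < s2 →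
    F ρ τ s1 s2 = ∑ i, c i * ρ ^ a i * τ ^ b i * s1 ^ p i * s2 ^ q i

/-- The Euler operator `x d/dx` multiplies `x^e` by `e`. -/
lemma euler_deriv {n : ℕ} {f : ℝ → ℝ} {k e : Fin n → ℝ}
    (h : ∀ x, 0 < x → f x = ∑ i, k i * x ^ e i) {x : ℝ} (hx : 0 < x) :
    x * deriv f x = ∑ i, e i * (k i * x ^ e i) := by
  have hev : f =ᶠ[nhds x] fun y => ∑ i, k i * y ^ e i := by
    filter_upwards [lt_mem_nhds hx] with y hy using h y hy
  have hd : HasDerivAt (fun y => ∑ i, k i * y ^ e i) (∑ i, k i * (e i * x ^ (e i - 1))) x :=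
    HasDerivAt.fun_sum fun i _ => (Real.hasDerivAt_rpow_const (Or.inl hx.ne')).const_mul (k i)
  rw [hev.deriv_eq, hd.deriv, Finset.mul_sum]
  refine Finset.sum_congr rfl fun i _ => ?_
  rw [Real.rpow_sub_one hx.ne']
  field_simp

namespace IsMonomialSum

variable {n : ℕ} {F : ℝ → ℝ → ℝ → ℝ → ℝ} {c a b p q : Fin n → ℝ}

lemma rD4 (h : IsMonomialSum F c a b p q) :
    IsMonomialSum (rD4 F) (fun i => a i * c i) a b p q := by
  intro ρ τ s1 s2 hρ hτ h1 h2
  refine (euler_deriv (k := fun i => c i * τ ^ b i * s1 ^ p i * s2 ^ q i) (e := a)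
    (fun x hx => ?_) hρ).trans (Finset.sum_congr rfl fun i _ => by ring)
  rw [h x τ s1 s2 hx hτ h1 h2]
  exact Finset.sum_congr rfl fun i _ => by ring

lemma tD4 (h : IsMonomialSum F c a b p q) :
    IsMonomialSum (tD4 F) (fun i => b i * c i) a b p q := by
  intro ρ τ s1 s2 hρ hτ h1 h2
  refine (euler_deriv (k := fun i => c i * ρ ^ a i * s1 ^ p i * s2 ^ q i) (e := b)
    (fun x hx => ?_) hτ).trans (Finset.sum_congr rfl fun i _ => by ring)
  rw [h ρ x s1 s2 hρ hx h1 h2]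
  exact Finset.sum_congr rfl fun i _ => by ring

lemma s1D4 (h : IsMonomialSum F c a b p q) :
    IsMonomialSum (s1D4 F) (fun i => p i * c i) a b p q := by
  intro ρ τ s1 s2 hρ hτ h1 h2
  refine (euler_deriv (k := fun i => c i * ρ ^ a i * τ ^ b i * s2 ^ q i) (e := p)
    (fun x hx => ?_) h1).trans (Finset.sum_congr rfl fun i _ => by ring)
  rw [h ρ τ x s2 hρ hτ hx h2]
  exact Finset.sum_congr rfl fun i _ => by ring

lemma s2D4 (h : IsMonomialSum F c a b p q) :
    IsMonomialSum (s2D4 F) (fun i => q i * c i) a b p q := by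
  intro ρ τ s1 s2 hρ hτ h1 h2
  refine (euler_deriv (k := fun i => c i * ρ ^ a i * τ ^ b i * s1 ^ p i) (e := q)
    (fun x hx => ?_) h2).trans (Finset.sum_congr rfl fun i _ => by ring)
  rw [h ρ τ s1 x hρ hτ h1 hx]

lemma sig1hatD (h : IsMonomialSum F c a b p q) :
    IsMonomialSum (sig1hatD F) (fun i => 1 / (2 * √3) * (p i + q i) * c i) a b p q := by
  intro ρ τ s1 s2 hρ hτ h1 h2
  rw [_root_.sig1hatD, h.s1D4 ρ τ s1 s2 hρ hτ h1 h2, h.s2D4 ρ τ s1 s2 hρ hτ h1 h2,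
    ← Finset.sum_add_distrib, Finset.mul_sum]
  exact Finset.sum_congr rfl fun i _ => by ring

lemma apply_one (h : IsMonomialSum F c a b p q) : F 1 1 1 1 = ∑ i, c i := by
  simpa using h 1 1 1 1 one_pos one_pos one_pos one_pos

/-- The double application of `∂_{σ̂₁}`, with the factor `(1/(2√3))² = 1/12` evaluated. -/
lemma sig1hatD_sq_apply_one (h : IsMonomialSum F c a b p q) :
    _root_.sig1hatD (_root_.sig1hatD F) 1 1 1 1 = ∑ i, (p i + q i) ^ 2 / 12 * c i := by
  rw [h.sig1hatD.sig1hatD.apply_one]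
  refine Finset.sum_congr rfl fun i _ => ?_
  have h3 : (1 / (2 * √3)) ^ 2 = (1 / 12 : ℝ) := by
    rw [div_pow, mul_pow, Real.sq_sqrt (by norm_num)]
    norm_num
  linear_combination (p i + q i) ^ 2 * c i * h3

end IsMonomialSum

/-- The terms are ordered as the parameters: `R₁,…,R₆`, `h₀, h₂`, `t₁, t₂, t₃`, `f₁, f₃, f₅`. -/
lemma isMonomialSum_V4 (R1 R2 R3 R4 R5 R6 h0 h2 t1 t2 t3 f1 f3 f5 : ℝ) :
    IsMonomialSum (V4 R1 R2 R3 R4 R5 R6 h0 h2 t1 t2 t3 f1 f3 f5)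
      ![-R1 / 2, -R2 / 2, -R3 / 2, -R4 / 2, -R5 / 2, -R6 / 2, h0 / 4, h2 / 4,
        -t1 / 12, -t2 / 12, -t3 / 12, f1 / 4, f3 / 4, f5 / 4]
      ![-1, -1, -1, -1, -1, -1, -3, -3, -(1/2), -(1/2), -(1/2), 2, 0, -2]
      ![-2, -2, -2, -2, -2, -2, -2, -2, -3, -3, -3, -4, -4, -4]
      ![-8, 4, 4, -2, 4, -2, -6, 6, -4, 2, 2, -2, 0, 2]
      ![4, -8, 4, -2, -2, 4, 6, -6, 2, -4, 2, -2, 0, 2] := by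
  intro ρ τ s1 s2 hρ hτ h1 h2
  simp only [V4, Fin.sum_univ_succ, Fin.sum_univ_zero, Matrix.cons_val_zero, Matrix.cons_val_succ,
    Real.mul_rpow h1.le h2.le, Real.rpow_zero]
  ring

/-- At `(1,1,1,1)`:
`2·[ −(8/3)·V − (1/3)·ρ∂_ρV − (5/6)·τ∂_τV + (1/6)·σ₁∂_{σ₁}V + (1/6)·σ₂∂_{σ₂}V + ∂_{σ̂₁}²V ]`
`= (1/3)·(f₁ + f₃ + 5·f₅ − 18·R₃ − t₃)`; consequently, at a de Sitter extremum with
`f₁ > 0`, `f₃ ≥ 0`, `f₅ ≥ 0`, `R₃ ≤ 0`, `t₃ ≤ 0`, one has `∂_{σ̂₁}²V|₍₁,₁,₁,₁₎ > 0`. -/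
theorem four_field_sigma1hat_sq (R1 R2 R3 R4 R5 R6 h0 h2 t1 t2 t3 f1 f3 f5 : ℝ) :
    (2 * (-(8/3) * V4 R1 R2 R3 R4 R5 R6 h0 h2 t1 t2 t3 f1 f3 f5 1 1 1 1
        - (1/3) * rD4 (V4 R1 R2 R3 R4 R5 R6 h0 h2 t1 t2 t3 f1 f3 f5) 1 1 1 1
        - (5/6) * tD4 (V4 R1 R2 R3 R4 R5 R6 h0 h2 t1 t2 t3 f1 f3 f5) 1 1 1 1
        + (1/6) * s1D4 (V4 R1 R2 R3 R4 R5 R6 h0 h2 t1 t2 t3 f1 f3 f5) 1 1 1 1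
        + (1/6) * s2D4 (V4 R1 R2 R3 R4 R5 R6 h0 h2 t1 t2 t3 f1 f3 f5) 1 1 1 1
        + sig1hatD (sig1hatD (V4 R1 R2 R3 R4 R5 R6 h0 h2 t1 t2 t3 f1 f3 f5)) 1 1 1 1)
      = (1/3) * (f1 + f3 + 5 * f5 - 18 * R3 - t3)) ∧
    ((deriv (fun x => V4 R1 R2 R3 R4 R5 R6 h0 h2 t1 t2 t3 f1 f3 f5 x 1 1 1) 1 = 0 ∧
        deriv (fun y => V4 R1 R2 R3 R4 R5 R6 h0 h2 t1 t2 t3 f1 f3 f5 1 y 1 1) 1 = 0 ∧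
        deriv (fun z => V4 R1 R2 R3 R4 R5 R6 h0 h2 t1 t2 t3 f1 f3 f5 1 1 z 1) 1 = 0 ∧
        deriv (fun w => V4 R1 R2 R3 R4 R5 R6 h0 h2 t1 t2 t3 f1 f3 f5 1 1 1 w) 1 = 0) →
      0 < V4 R1 R2 R3 R4 R5 R6 h0 h2 t1 t2 t3 f1 f3 f5 1 1 1 1 →
      0 < f1 → 0 ≤ f3 → 0 ≤ f5 → R3 ≤ 0 → t3 ≤ 0 →
      0 < sig1hatD (sig1hatD (V4 R1 R2 R3 R4 R5 R6 h0 h2 t1 t2 t3 f1 f3 f5)) 1 1 1 1) := by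
  have h := isMonomialSum_V4 R1 R2 R3 R4 R5 R6 h0 h2 t1 t2 t3 f1 f3 f5
  have key : 2 * (-(8/3) * V4 R1 R2 R3 R4 R5 R6 h0 h2 t1 t2 t3 f1 f3 f5 1 1 1 1
        - (1/3) * rD4 (V4 R1 R2 R3 R4 R5 R6 h0 h2 t1 t2 t3 f1 f3 f5) 1 1 1 1
        - (5/6) * tD4 (V4 R1 R2 R3 R4 R5 R6 h0 h2 t1 t2 t3 f1 f3 f5) 1 1 1 1
        + (1/6) * s1D4 (V4 R1 R2 R3 R4 R5 R6 h0 h2 t1 t2 t3 f1 f3 f5) 1 1 1 1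
        + (1/6) * s2D4 (V4 R1 R2 R3 R4 R5 R6 h0 h2 t1 t2 t3 f1 f3 f5) 1 1 1 1
        + sig1hatD (sig1hatD (V4 R1 R2 R3 R4 R5 R6 h0 h2 t1 t2 t3 f1 f3 f5)) 1 1 1 1)
      = (1/3) * (f1 + f3 + 5 * f5 - 18 * R3 - t3) := by
    rw [h.apply_one, h.rD4.apply_one, h.tD4.apply_one, h.s1D4.apply_one, h.s2D4.apply_one,
      h.sig1hatD_sq_apply_one]
    simp only [Fin.sum_univ_succ, Fin.sum_univ_zero, Matrix.cons_val_zero, Matrix.cons_val_succ]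
    ring
  refine ⟨key, ?_⟩
  rintro ⟨hρ, hτ, h1, h2⟩ hV hf1 hf3 hf5 hR3 ht3
  rw [rD4, tD4, s1D4, s2D4, hρ, hτ, h1, h2] at key
  linarith
end

section
/- Let V(ρ, τ, σ₁, σ₂) be the four-field potential with parameters R₁,…,R₆, h₀, h₂, t₁, t₂, t₃, f₁, f₃, f₅, and suppose all four first partial derivatives of V vanish at (ρ, τ, σ₁, σ₂) = (1, 1, 1, 1). Then 2·V(1,1,1,1) = R₄ + R₁ + R₂ − R₃ − (1/2)·( f₁ + f₃ + f₅ + h₀ + h₂ ) + (1/6)·( t₁ + t₂ ). (Equivalently, with 𝓡₄ = 4·V(1,1,1,1), this is the relation (1/2)·𝓡₄ = R₄ + R₁ + R₂ − R₃ − (1/2)(f₁ + f₃ + f₅ + h₀ + h₂) + (1/6)(t₁ + t₂ + t₃ − t₃).) -/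
/-- A finite sum `∑ cᵢ·x^(aᵢ)` of real powers has derivative `∑ cᵢ·aᵢ` at `x = 1`. -/
lemma deriv_sum_rpow_at_one {n : ℕ} (c a : Fin n → ℝ) :
    deriv (fun x : ℝ => ∑ i, c i * x ^ a i) 1 = ∑ i, c i * a i := by
  refine (HasDerivAt.fun_sum fun i _ => ?_).deriv
  simpa using (Real.hasDerivAt_rpow_const (x := 1) (p := a i) (Or.inl one_ne_zero)).const_mul (c i)

/-- If all four first partial derivatives of the four-field potential
vanish at `(1,1,1,1)`, then
`2·V(1,1,1,1) = R₄ + R₁ + R₂ − R₃ − (1/2)·(f₁ + f₃ + f₅ + h₀ + h₂) + (1/6)·(t₁ + t₂)`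
(equivalently, `(1/2)·𝓡₄ = R₄ + R₁ + R₂ − R₃ − … ` with `𝓡₄ = 4·V(1,1,1,1)`). -/
theorem four_field_R4_relation (R1 R2 R3 R4 R5 R6 h0 h2 t1 t2 t3 f1 f3 f5 : ℝ)
    (hρ : deriv (fun x => V4 R1 R2 R3 R4 R5 R6 h0 h2 t1 t2 t3 f1 f3 f5 x 1 1 1) 1 = 0)
    (hτ : deriv (fun y => V4 R1 R2 R3 R4 R5 R6 h0 h2 t1 t2 t3 f1 f3 f5 1 y 1 1) 1 = 0)
    (hs1 : deriv (fun z => V4 R1 R2 R3 R4 R5 R6 h0 h2 t1 t2 t3 f1 f3 f5 1 1 z 1) 1 = 0)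
    (hs2 : deriv (fun w => V4 R1 R2 R3 R4 R5 R6 h0 h2 t1 t2 t3 f1 f3 f5 1 1 1 w) 1 = 0) :
    2 * V4 R1 R2 R3 R4 R5 R6 h0 h2 t1 t2 t3 f1 f3 f5 1 1 1 1
      = R4 + R1 + R2 - R3 - (1/2) * (f1 + f3 + f5 + h0 + h2) + (1/6) * (t1 + t2) := by
  -- Each restriction of `V4` to a coordinate line through `(1,1,1,1)` is a sum of powers, with
  -- the monomials of equal exponent grouped together.
  have ehρ : (fun x => V4 R1 R2 R3 R4 R5 R6 h0 h2 t1 t2 t3 f1 f3 f5 x 1 1 1)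
      = fun x : ℝ => ∑ i,
        (![-(R1 + R2 + R3 + R4 + R5 + R6) / 2, (h0 + h2) / 4,
          -(t1 + t2 + t3) / 12, f1 / 4, f3 / 4, f5 / 4] i : ℝ)
          * x ^ (![-1, -3, -(1/2), 2, 0, -2] i : ℝ) := by
    funext x
    simp only [V4, Fin.sum_univ_succ, Fin.sum_univ_zero, Matrix.cons_val_zero,
      Matrix.cons_val_succ, Real.one_rpow, Real.rpow_zero, one_mul, mul_one]
    ring
  rw [ehρ, deriv_sum_rpow_at_one] at hρ
  have ehτ : (fun y => V4 R1 R2 R3 R4 R5 R6 h0 h2 t1 t2 t3 f1 f3 f5 1 y 1 1)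
      = fun y : ℝ => ∑ i,
        (![-(R1 + R2 + R3 + R4 + R5 + R6) / 2 + (h0 + h2) / 4,
          -(t1 + t2 + t3) / 12, (f1 + f3 + f5) / 4] i : ℝ)
          * y ^ (![-2, -3, -4] i : ℝ) := by
    funext y
    simp only [V4, Fin.sum_univ_succ, Fin.sum_univ_zero, Matrix.cons_val_zero,
      Matrix.cons_val_succ, Real.one_rpow, Real.rpow_zero, one_mul, mul_one]
    ring
  rw [ehτ, deriv_sum_rpow_at_one] at hτ
  have ehs1 : (fun z => V4 R1 R2 R3 R4 R5 R6 h0 h2 t1 t2 t3 f1 f3 f5 1 1 z 1)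
      = fun z : ℝ => ∑ i,
        (![-R1 / 2, -(R2 + R3 + R5) / 2, -(R4 + R6) / 2 + f1 / 4, h0 / 4, h2 / 4,
          -t1 / 12, -(t2 + t3) / 12 + f5 / 4, f3 / 4] i : ℝ)
          * z ^ (![-8, 4, -2, -6, 6, -4, 2, 0] i : ℝ) := by
    funext z
    simp only [V4, Fin.sum_univ_succ, Fin.sum_univ_zero, Matrix.cons_val_zero,
      Matrix.cons_val_succ, Real.one_rpow, Real.rpow_zero, one_mul, mul_one]
    ring
  rw [ehs1, deriv_sum_rpow_at_one] at hs1
  have ehs2 : (fun w => V4 R1 R2 R3 R4 R5 R6 h0 h2 t1 t2 t3 f1 f3 f5 1 1 1 w)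
      = fun w : ℝ => ∑ i,
        (![-R2 / 2, -(R1 + R3 + R6) / 2, -(R4 + R5) / 2 + f1 / 4, h2 / 4, h0 / 4,
          -t2 / 12, -(t1 + t3) / 12 + f5 / 4, f3 / 4] i : ℝ)
          * w ^ (![-8, 4, -2, -6, 6, -4, 2, 0] i : ℝ) := by
    funext w
    simp only [V4, Fin.sum_univ_succ, Fin.sum_univ_zero, Matrix.cons_val_zero,
      Matrix.cons_val_succ, Real.one_rpow, Real.rpow_zero, one_mul, mul_one]
    ring
  rw [ehs2, deriv_sum_rpow_at_one] at hs2
  simp only [Fin.sum_univ_succ, Fin.sum_univ_zero, Matrix.cons_val_zero,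
    Matrix.cons_val_succ] at hρ hτ hs1 hs2
  simp only [V4, Real.one_rpow, one_mul, mul_one]
  -- Twice the weights `1/3, 1/2, 1/6, 1/6`, since the derivatives are those of `V`, not `2·V`.
  linear_combination (-(2/3)) * hρ - hτ - (1/3) * hs1 - (1/3) * hs2
end
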